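/- arXiv:1407.4416 — 2 statements merged into one kernel-verified Lean document; each statement's English description precedes it below -/
import Mathlib

section
/- Corollary (MinHash p1 bound for cosine similarity): let W1, W2 be nonempty subsets of Ω = {1, ..., D} with cosine similarity S, and let π be a uniformly random permutation of Ω. If S ≥ S0 for some S0 ∈ [0,1], then the collision probability Pr(min(π(W1)) = min(π(W2))) = R satisfies R ≥ S0². -/
/-!
Write `U = W1 ∪ W2`. For a uniformly random permutation each element of `U` is equally likely to
receive the smallest value on `U` (precompose with a transposition), so each does so for exactly
`D! / |U|` permutations (`card_minAt_eq`, `card_mul_card_minAt`). If the minimizer lies in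
`W1 ∩ W2`, both hashes equal its value, so the collision probability is at least
`R = |W1 ∩ W2| / |U|` (`resemblance_le_collision`); this direction suffices for the bound.
Finally, with `a = |W1 ∩ W2|` and `|U| = f1 + f2 - a`, the inequality
`(f1 - a) * (f2 - a) ≥ 0` says `a * |U| ≤ f1 * f2`, whence `S0² ≤ a² / (f1 * f2) ≤ a / |U|`.
-/

/-- The permutations whose minimum over `U` is attained at `x`. -/
def minAt {D : ℕ} (U : Finset (Fin D)) (x : Fin D) : Finset (Equiv.Perm (Fin D)) :=
  Finset.univ.filter (fun π => ∀ y ∈ U, π x ≤ π y)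

lemma mem_minAt {D : ℕ} {U : Finset (Fin D)} {x : Fin D} {π : Equiv.Perm (Fin D)} :
    π ∈ minAt U x ↔ ∀ y ∈ U, π x ≤ π y := by
  simp [minAt]

lemma swap_mem {D : ℕ} {U : Finset (Fin D)} {x x' : Fin D} (hx : x ∈ U) (hx' : x' ∈ U)
    {y : Fin D} (hy : y ∈ U) : Equiv.swap x x' y ∈ U := by
  rw [Equiv.swap_apply_def]
  split_ifs <;> assumption

/-- Precomposition with the transposition of `x` and `x'` injects `minAt U x` into
`minAt U x'`. -/
lemma card_minAt_le {D : ℕ} {U : Finset (Fin D)} {x x' : Fin D} (hx : x ∈ U) (hx' : x' ∈ U) :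
    (minAt U x).card ≤ (minAt U x').card := by
  refine Finset.card_le_card_of_injOn (fun π => π * Equiv.swap x x') ?_
    (fun _ _ _ _ h => mul_right_cancel h)
  intro π hπ
  have hπ' := mem_minAt.1 (Finset.mem_coe.1 hπ)
  refine Finset.mem_coe.2 (mem_minAt.2 fun y hy => ?_)
  simpa using hπ' _ (swap_mem hx hx' hy)

lemma card_minAt_eq {D : ℕ} {U : Finset (Fin D)} {x x' : Fin D} (hx : x ∈ U) (hx' : x' ∈ U) :
    (minAt U x).card = (minAt U x').card :=
  (card_minAt_le hx hx').antisymm (card_minAt_le hx' hx)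

lemma disjoint_minAt {D : ℕ} {U V : Finset (Fin D)} (hVU : V ⊆ U) :
    (V : Set (Fin D)).PairwiseDisjoint (minAt U) := by
  intro x hx y hy hxy
  refine Finset.disjoint_left.2 fun π h h' => hxy (π.injective (le_antisymm ?_ ?_))
  · exact mem_minAt.1 h y (hVU hy)
  · exact mem_minAt.1 h' x (hVU hx)

lemma card_biUnion_minAt {D : ℕ} {U V : Finset (Fin D)} (hVU : V ⊆ U) {x : Fin D} (hx : x ∈ U) :
    (V.biUnion (minAt U)).card = V.card * (minAt U x).card := by
  rw [Finset.card_biUnion (disjoint_minAt hVU)]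
  exact Finset.sum_const_nat fun y hy => card_minAt_eq (hVU hy) hx

/-- The sets `minAt U y`, for `y ∈ U`, partition the permutations into classes of equal size. -/
lemma card_mul_card_minAt {D : ℕ} {U : Finset (Fin D)} {x : Fin D} (hx : x ∈ U) :
    U.card * (minAt U x).card = Fintype.card (Equiv.Perm (Fin D)) := by
  rw [← card_biUnion_minAt subset_rfl hx, ← Finset.card_univ]
  congr 1
  refine Finset.eq_univ_of_forall fun π => ?_
  obtain ⟨y, hy, hmin⟩ := Finset.exists_min_image U π ⟨x, hx⟩
  exact Finset.mem_biUnion.2 ⟨y, hy, mem_minAt.2 hmin⟩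

lemma min'_image_eq {D : ℕ} {U W : Finset (Fin D)} (hW : W.Nonempty) (hWU : W ⊆ U) {x : Fin D}
    (hx : x ∈ W) {π : Equiv.Perm (Fin D)} (hπ : π ∈ minAt U x) :
    (W.image π).min' (hW.image π) = π x := by
  refine le_antisymm (Finset.min'_le _ _ (Finset.mem_image_of_mem _ hx)) ?_
  refine Finset.le_min' _ _ _ fun z hz => ?_
  obtain ⟨y, hy, rfl⟩ := Finset.mem_image.1 hz
  exact mem_minAt.1 hπ y (hWU hy)

/-- The resemblance is a lower bound for the MinHash collision probability. -/
lemma resemblance_le_collision {D : ℕ} (W1 W2 : Finset (Fin D))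
    (h1 : W1.Nonempty) (h2 : W2.Nonempty) :
    ((W1 ∩ W2).card : ℝ) / ((W1 ∪ W2).card : ℝ) ≤
      ((Finset.univ.filter (fun π : Equiv.Perm (Fin D) =>
        (W1.image π).min' (h1.image π) = (W2.image π).min' (h2.image π))).card : ℝ) /
      (Fintype.card (Equiv.Perm (Fin D)) : ℝ) := by
  have ⟨x, hx⟩ := id h1
  have hxU : x ∈ W1 ∪ W2 := Finset.mem_union_left _ hx
  have hsub : W1 ∩ W2 ⊆ W1 ∪ W2 := Finset.inter_subset_left.trans Finset.subset_union_left
  have hN := card_mul_card_minAt hxU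
  have hle : (W1 ∩ W2).card * (minAt (W1 ∪ W2) x).card ≤
      (Finset.univ.filter (fun π : Equiv.Perm (Fin D) =>
        (W1.image π).min' (h1.image π) = (W2.image π).min' (h2.image π))).card := by
    rw [← card_biUnion_minAt hsub hxU]
    refine Finset.card_le_card fun π hπ => ?_
    obtain ⟨y, hy, hyπ⟩ := Finset.mem_biUnion.1 hπ
    obtain ⟨hy1, hy2⟩ := Finset.mem_inter.1 hy
    rw [Finset.mem_filter]
    exact ⟨Finset.mem_univ _, (min'_image_eq h1 Finset.subset_union_left hy1 hyπ).trans
      (min'_image_eq h2 Finset.subset_union_right hy2 hyπ).symm⟩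
  have hNpos : 0 < (Fintype.card (Equiv.Perm (Fin D)) : ℝ) := by
    exact_mod_cast Fintype.card_pos
  have hUpos : 0 < ((W1 ∪ W2).card : ℝ) := by
    exact_mod_cast Finset.card_pos.2 ⟨x, hxU⟩
  rw [div_le_div_iff₀ hUpos hNpos, ← hN]
  have hle' := Nat.mul_le_mul_right (W1 ∪ W2).card hle
  exact_mod_cast (by linarith : (W1 ∩ W2).card * ((W1 ∪ W2).card * (minAt (W1 ∪ W2) x).card) ≤ _)

/-- The squared cosine similarity is at most the resemblance. -/
lemma cosine_sq_le_resemblance {D : ℕ} (W1 W2 : Finset (Fin D))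
    (h1 : W1.Nonempty) (h2 : W2.Nonempty) :
    (((W1 ∩ W2).card : ℝ) / Real.sqrt ((W1.card : ℝ) * (W2.card : ℝ))) ^ 2 ≤
      ((W1 ∩ W2).card : ℝ) / ((W1 ∪ W2).card : ℝ) := by
  have hf1 : 0 < (W1.card : ℝ) := by exact_mod_cast h1.card_pos
  have hf2 : 0 < (W2.card : ℝ) := by exact_mod_cast h2.card_pos
  have hU : 0 < ((W1 ∪ W2).card : ℝ) := by
    exact_mod_cast (h1.mono Finset.subset_union_left).card_pos
  have ha1 : ((W1 ∩ W2).card : ℝ) ≤ W1.card := by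
    exact_mod_cast Finset.card_le_card Finset.inter_subset_left
  have ha2 : ((W1 ∩ W2).card : ℝ) ≤ W2.card := by
    exact_mod_cast Finset.card_le_card Finset.inter_subset_right
  have hsum : ((W1 ∪ W2).card : ℝ) + (W1 ∩ W2).card = W1.card + W2.card := by
    exact_mod_cast Finset.card_union_add_card_inter W1 W2
  have ha : (0 : ℝ) ≤ (W1 ∩ W2).card := Nat.cast_nonneg _
  rw [div_pow, Real.sq_sqrt (by positivity), div_le_div_iff₀ (by positivity) hU]
  have hUeq : ((W1 ∪ W2).card : ℝ) = W1.card + W2.card - (W1 ∩ W2).card := by linarith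
  have key : ((W1 ∩ W2).card : ℝ) * (W1 ∪ W2).card ≤ W1.card * W2.card := by
    rw [hUeq]
    nlinarith [mul_nonneg (sub_nonneg.2 ha1) (sub_nonneg.2 ha2)]
  calc ((W1 ∩ W2).card : ℝ) ^ 2 * (W1 ∪ W2).card
      = (W1 ∩ W2).card * ((W1 ∩ W2).card * (W1 ∪ W2).card) := by ring
    _ ≤ (W1 ∩ W2).card * (W1.card * W2.card) := mul_le_mul_of_nonneg_left key ha


/-- MinHash `p1` bound for cosine similarity: if the cosine similarity `S` of nonempty
`W1, W2 ⊆ Fin D` satisfies `S ≥ S0` for `S0 ∈ [0,1]`, then the MinHash collision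
probability is at least `S0²`. -/
theorem minhash_p1_bound (D : ℕ) (W1 W2 : Finset (Fin D))
    (h1 : W1.Nonempty) (h2 : W2.Nonempty) (S0 : ℝ) (hS0 : S0 ∈ Set.Icc (0 : ℝ) 1)
    (hS : S0 ≤ ((W1 ∩ W2).card : ℝ) / Real.sqrt ((W1.card : ℝ) * (W2.card : ℝ))) :
    S0 ^ 2 ≤ ((Finset.univ.filter (fun π : Equiv.Perm (Fin D) =>
        (W1.image π).min' (h1.image π) = (W2.image π).min' (h2.image π))).card : ℝ) /
      (Fintype.card (Equiv.Perm (Fin D)) : ℝ) := by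
  exact (pow_le_pow_left₀ hS0.1 hS 2).trans
    ((cosine_sq_le_resemblance W1 W2 h1 h2).trans (resemblance_le_collision W1 W2 h1 h2))
end

section
/- Corollary (MinHash p2 bound for cosine similarity): let W1, W2 be nonempty subsets of Ω = {1, ..., D} with cosine similarity S, and let π be a uniformly random permutation of Ω. If S ≤ cS0 for some S0 ∈ (0,1] and c ∈ (0,1), then the collision probability Pr(min(π(W1)) = min(π(W2))) = R satisfies R ≤ cS0/(2 − cS0). -/
/-!
For a nonempty `U`, let `argminPerms U x` be the set of permutations `π` for which `x` minimises `π`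
over `U`. Composing with the transposition of `x, y ∈ U` shows that these sets all have the same
size, and for `x ∈ U` they partition the permutations; so each has `D! / |U|` elements. Taking
`U = W1 ∪ W2`, a MinHash collision means that the minimiser over `U` lies in `W1 ∩ W2`, so the
collision probability is at most the resemblance `a / |U|`, where `a = |W1 ∩ W2|`. The AM-GM
inequality `√(f1 f2) ≤ (f1 + f2) / 2` turns `S ≤ t` into `2 a ≤ t (f1 + f2)`, which together with
`|U| = f1 + f2 - a` is the bound `a / |U| ≤ t / (2 - t)`.
-/

/-- The permutations `π` satisfying `π x ≤ π y` for all `y ∈ U`; for `x ∈ U` this says that `x`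
is the minimiser of `π` over `U`. -/
def argminPerms {D : ℕ} (U : Finset (Fin D)) (x : Fin D) : Finset (Equiv.Perm (Fin D)) :=
  Finset.univ.filter (fun π => ∀ y ∈ U, π x ≤ π y)

lemma mem_argminPerms {D : ℕ} {U : Finset (Fin D)} {x : Fin D} {π : Equiv.Perm (Fin D)} :
    π ∈ argminPerms U x ↔ ∀ y ∈ U, π x ≤ π y := by
  simp [argminPerms]

lemma swap_apply_mem {D : ℕ} {U : Finset (Fin D)} {x y z : Fin D}
    (hx : x ∈ U) (hy : y ∈ U) (hz : z ∈ U) : Equiv.swap x y z ∈ U := by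
  rw [Equiv.swap_apply_def]
  split_ifs <;> assumption

/-- Right multiplication by `swap x y` injects `argminPerms U x` into `argminPerms U y`. -/
lemma card_argminPerms_le {D : ℕ} {U : Finset (Fin D)} {x y : Fin D}
    (hx : x ∈ U) (hy : y ∈ U) : (argminPerms U x).card ≤ (argminPerms U y).card := by
  refine Finset.card_le_card_of_injOn (fun π => π * Equiv.swap x y) ?_
    (fun _ _ _ _ h => mul_right_cancel h)
  intro π hπ
  have hπ' := mem_argminPerms.1 hπ
  refine mem_argminPerms.2 fun z hz => ?_
  simpa using hπ' _ (swap_apply_mem hx hy hz)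

lemma card_biUnion_argminPerms {D : ℕ} {U T : Finset (Fin D)} (hT : T ⊆ U) {x : Fin D}
    (hx : x ∈ U) : (T.biUnion (argminPerms U)).card = T.card * (argminPerms U x).card := by
  rw [Finset.card_biUnion]
  · exact Finset.sum_const_nat fun y hy =>
      (card_argminPerms_le (hT hy) hx).antisymm (card_argminPerms_le hx (hT hy))
  · intro y hy z hz hyz
    refine Finset.disjoint_left.2 fun π h h' => hyz (π.injective ?_)
    exact (mem_argminPerms.1 h z (hT hz)).antisymm (mem_argminPerms.1 h' y (hT hy))

lemma biUnion_argminPerms_self {D : ℕ} {U : Finset (Fin D)} (hU : U.Nonempty) :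
    U.biUnion (argminPerms U) = Finset.univ := by
  refine Finset.eq_univ_of_forall fun π => ?_
  obtain ⟨x, hx, hmin⟩ := U.exists_min_image π hU
  exact Finset.mem_biUnion.2 ⟨x, hx, mem_argminPerms.2 hmin⟩

lemma collision_subset {D : ℕ} (W1 W2 : Finset (Fin D)) (h1 : W1.Nonempty) (h2 : W2.Nonempty) :
    Finset.univ.filter (fun π : Equiv.Perm (Fin D) =>
        (W1.image π).min' (h1.image π) = (W2.image π).min' (h2.image π)) ⊆
      (W1 ∩ W2).biUnion (argminPerms (W1 ∪ W2)) := by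
  intro π hπ
  have he := (Finset.mem_filter.1 hπ).2
  obtain ⟨x, hx, hxm⟩ := Finset.mem_image.1 ((W1.image π).min'_mem (h1.image π))
  obtain ⟨y, hy, hym⟩ := Finset.mem_image.1 ((W2.image π).min'_mem (h2.image π))
  obtain rfl : x = y := π.injective (by rw [hxm, hym, he])
  refine Finset.mem_biUnion.2 ⟨x, Finset.mem_inter.2 ⟨hx, hy⟩, mem_argminPerms.2 fun z hz => ?_⟩
  rcases Finset.mem_union.1 hz with hz | hz
  · rw [hxm]
    exact Finset.min'_le _ _ (Finset.mem_image_of_mem _ hz)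
  · rw [hym]
    exact Finset.min'_le _ _ (Finset.mem_image_of_mem _ hz)

/-- The collision probability is at most the resemblance. -/
lemma collision_le_resemblance {D : ℕ} (W1 W2 : Finset (Fin D)) (h1 : W1.Nonempty)
    (h2 : W2.Nonempty) :
    ((Finset.univ.filter (fun π : Equiv.Perm (Fin D) =>
        (W1.image π).min' (h1.image π) = (W2.image π).min' (h2.image π))).card : ℝ) /
      (Fintype.card (Equiv.Perm (Fin D)) : ℝ) ≤
      ((W1 ∩ W2).card : ℝ) / ((W1 ∪ W2).card : ℝ) := by
  obtain ⟨x, hx⟩ := h1.mono (Finset.subset_union_left (s₂ := W2))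
  have hle := Finset.card_le_card (collision_subset W1 W2 h1 h2)
  rw [card_biUnion_argminPerms
    (Finset.inter_subset_left.trans Finset.subset_union_left) hx] at hle
  have hall := card_biUnion_argminPerms (Finset.Subset.refl (W1 ∪ W2)) hx
  rw [biUnion_argminPerms_self ⟨x, hx⟩, Finset.card_univ] at hall
  have hU : 0 < (W1 ∪ W2).card := Finset.card_pos.2 ⟨x, hx⟩
  rw [div_le_div_iff₀ (by exact_mod_cast Fintype.card_pos) (by exact_mod_cast hU), hall]
  norm_cast
  calc _ ≤ (W1 ∩ W2).card * (argminPerms (W1 ∪ W2) x).card * (W1 ∪ W2).card :=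
        Nat.mul_le_mul_right _ hle
    _ = _ := by ring

/-- MinHash `p2` bound for cosine similarity: if the cosine similarity `S` of nonempty
`W1, W2 ⊆ Fin D` satisfies `S ≤ c·S0` for `S0 ∈ (0,1]` and `c ∈ (0,1)`, then the MinHash
collision probability is at most `c·S0 / (2 - c·S0)`. -/
theorem minhash_p2_bound (D : ℕ) (W1 W2 : Finset (Fin D))
    (h1 : W1.Nonempty) (h2 : W2.Nonempty) (S0 c : ℝ)
    (hS0 : 0 < S0) (hS0' : S0 ≤ 1) (hc : 0 < c) (hc' : c < 1)
    (hS : ((W1 ∩ W2).card : ℝ) / Real.sqrt ((W1.card : ℝ) * (W2.card : ℝ)) ≤ c * S0) :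
    ((Finset.univ.filter (fun π : Equiv.Perm (Fin D) =>
        (W1.image π).min' (h1.image π) = (W2.image π).min' (h2.image π))).card : ℝ) /
      (Fintype.card (Equiv.Perm (Fin D)) : ℝ) ≤ c * S0 / (2 - c * S0) := by
  refine (collision_le_resemblance W1 W2 h1 h2).trans ?_
  have hf1 : (0 : ℝ) < W1.card := by exact_mod_cast h1.card_pos
  have hf2 : (0 : ℝ) < W2.card := by exact_mod_cast h2.card_pos
  have hU : (0 : ℝ) < (W1 ∪ W2).card := by
    exact_mod_cast (h1.mono Finset.subset_union_left).card_pos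
  have hsum : ((W1 ∪ W2).card : ℝ) + (W1 ∩ W2).card = W1.card + W2.card := by
    exact_mod_cast Finset.card_union_add_card_inter W1 W2
  have ht : 0 < c * S0 := mul_pos hc hS0
  have ht1 : c * S0 < 1 := by nlinarith
  have hamgm : Real.sqrt ((W1.card : ℝ) * W2.card) ≤ (W1.card + W2.card) / 2 := by
    rw [Real.sqrt_le_left (by positivity)]
    nlinarith [sq_nonneg ((W1.card : ℝ) - W2.card)]
  rw [div_le_iff₀ (Real.sqrt_pos.2 (mul_pos hf1 hf2))] at hS
  have ha := hS.trans (mul_le_mul_of_nonneg_left hamgm ht.le)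
  rw [← hsum] at ha
  rw [div_le_div_iff₀ hU (by linarith)]
  linarith
end
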